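/- arXiv:2010.05033 — 5 statements merged into one kernel-verified Lean document; each statement's English description precedes it below -/
import Mathlib

section
/- Let D be a quadratic discriminant and O_D the corresponding quadratic order. If every rational prime number factors in O_D as a finite product of prime elements of O_D, then O_D is a unique factorization domain. -/
/-!
The ring is a domain because its defining polynomial `m = X² - σX + (σ - D)/4` is monic of degree
two with nonsquare discriminant `D`, hence prime in `ℤ[X]`. Kaplansky's criterion then reduces
unique factorization to finding a prime element in every nonzero prime ideal `P`. Since the order is
integral over `ℤ`, the contraction `P ∩ ℤ` is a nonzero prime ideal, so `P` contains a rational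
prime `p`. By hypothesis `p` is a product of prime elements, and one of these factors lies in `P`.
-/

open Polynomial

/-- The defining polynomial of a quadratic order generates a prime ideal: a root would make the
discriminant `D` a square. -/
theorem prime_quadraticOrder_poly (D d σ : ℤ) (hσ : σ = 0 ∨ σ = 1) (hD : D = 4 * d + σ)
    (hns : ¬ IsSquare D) : Prime (X ^ 2 - C σ * X + C ((σ - D) / 4) : ℤ[X]) := by
  have hd : (σ - D) / 4 = -d := by omega
  rw [hd]
  have hm : (X ^ 2 - C σ * X + C (-d) : ℤ[X]).Monic := by monicity!
  have hdeg : (X ^ 2 - C σ * X + C (-d) : ℤ[X]).natDegree = 2 := by compute_degree!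
  refine Irreducible.prime
    ((hm.irreducible_iff_roots_eq_zero_of_degree_le_three hdeg.ge (by omega)).2 ?_)
  refine Multiset.eq_zero_of_forall_notMem fun x hx => hns ⟨2 * x - σ, ?_⟩
  have h := isRoot_of_mem_roots hx
  simp only [IsRoot.def, eval_add, eval_sub, eval_mul, eval_pow, eval_X, eval_C] at h
  have hσ2 : σ ^ 2 = σ := by rcases hσ with rfl | rfl <;> norm_num
  linear_combination hD - 4 * h - hσ2

/-- Let `D` be a quadratic discriminant (a nonsquare integer with `D = 4d + σ`,
`σ ∈ {0,1}`) and `O_D ≅ ℤ[X]/(m(X))` the quadratic order of discriminant `D`,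
`m(X) = X² - σX + (σ - D)/4`.  If every rational prime number factors in `O_D`
as a finite product of prime elements of `O_D`, then `O_D` is a unique
factorization domain. -/
theorem ufd_of_rational_primes_factor_into_primes
    (D d σ : ℤ) (hσ : σ = 0 ∨ σ = 1) (hD : D = 4 * d + σ) (hns : ¬ IsSquare D)
    (H : ∀ p : ℕ, p.Prime →
      ∃ s : Multiset (AdjoinRoot (X ^ 2 - C σ * X + C ((σ - D) / 4) : ℤ[X])),
        s ≠ 0 ∧ (∀ x ∈ s, Prime x) ∧
          s.prod = ((p : ℕ) : AdjoinRoot (X ^ 2 - C σ * X + C ((σ - D) / 4) : ℤ[X]))) :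
    ∃ hdom : IsDomain (AdjoinRoot (X ^ 2 - C σ * X + C ((σ - D) / 4) : ℤ[X])),
      letI := hdom
      UniqueFactorizationMonoid (AdjoinRoot (X ^ 2 - C σ * X + C ((σ - D) / 4) : ℤ[X])) := by
  have hprime := prime_quadraticOrder_poly D d σ hσ hD hns
  have hm : (X ^ 2 - C σ * X + C ((σ - D) / 4) : ℤ[X]).Monic := by monicity!
  have hdom := AdjoinRoot.isDomain_of_prime hprime
  refine ⟨hdom, UniqueFactorizationMonoid.iff_exists_prime_mem_of_isPrime.2 fun P hP hPprime => ?_⟩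
  have := hm.finite_adjoinRoot
  have hP' : P.comap (algebraMap ℤ _) ≠ ⊥ := Ideal.IsIntegral.comap_ne_bot _ hP
  obtain ⟨q, hqP, hq⟩ :=
    (hPprime.comap (algebraMap ℤ _)).exists_mem_prime_of_ne_bot hP'
  obtain ⟨s, -, hs, hprod⟩ := H q.natAbs (Int.prime_iff_natAbs_prime.1 hq)
  have hsP : s.prod ∈ P := by
    have hqP' : (q.natAbs : ℤ) ∈ P.comap (algebraMap ℤ _) :=
      Ideal.mem_of_dvd _ (Int.dvd_natAbs.2 dvd_rfl) hqP
    rwa [Ideal.mem_comap, map_natCast, ← hprod] at hqP'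
  obtain ⟨x, hxs, hxP⟩ := (hPprime.multiset_prod_mem_iff_exists_mem s).1 hsP
  exact ⟨x, hxP, hs x hxs⟩
end

section
/- The ring ℤ[(1+√73)/2], i.e., the quadratic order O_D of discriminant D = 73 (isomorphic to ℤ[X]/(X² − X − 18)), is a unique factorization domain. -/
open Polynomial

/-!
The ring is identified with `QuadraticAlgebra ℤ 18 1`, i.e. `ℤ ⊕ ℤω` with `ω² = 18 + ω`, whose norm
form is `N(a + bω) = a² + ab - 18b²`. It is a domain because `4N(a + bω) = (2a + b)² - 73b²` and
`73` is not a square.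

By Kaplansky's criterion it is enough to find a prime element in each nonzero prime ideal `I`.
Such an ideal contains a nonzero norm, hence a rational prime `p`, so everything follows once each
rational prime `p` is either prime in the ring or, up to sign, the norm of some element
(`isPrime_or_norm`): an element of norm `±p` is prime (`prime_of_norm`), and if `±p = π · star π`
then `I` contains `π` or `star π`.

`isPrime_or_norm` is proved by strong induction on `p`. The primes `2` and `3` are norms up to
sign, of `4 + ω` and `15 + 4ω`. If `p ≥ 5` is not prime in the ring, then `p` divides `N(n - ω)` for
some `n`, which may be chosen with `|2n - 1| ≤ p`; hence `|N(n - ω)| = pk` with `0 < k < p`. The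
prime factors `r` of `k` are smaller than `p`, so they obey the dichotomy, and Fermat's descent
(`descent`) divides `n - ω`, or its conjugate, by primes of the ring above the `r` until an element
of norm `±p` remains.
-/

namespace Order73

open QuadraticAlgebra

/-- The order of discriminant `73`, as `ℤ ⊕ ℤω` with `ω² = 18 + 1 · ω`. -/
abbrev O := QuadraticAlgebra ℤ 18 1

lemma norm_eq (z : O) : norm z = z.re ^ 2 + z.re * z.im - 18 * z.im ^ 2 := by
  rw [norm_def]; ring

lemma norm_cast_eq (z : O) : ((norm z : ℤ) : O) = z * star z := by
  rw [← algebraMap_norm_eq_mul_star]; rfl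

lemma intCast_dvd {n : ℤ} {z : O} : (n : O) ∣ z ↔ n ∣ z.re ∧ n ∣ z.im :=
  algebraMap_dvd_iff (r := n) (z := z)

lemma eq_zero_of_norm {z : O} (h : norm z = 0) : z = 0 := by
  rw [norm_eq] at h
  have h1 : (2 * z.re + z.im) ^ 2 = 73 * z.im ^ 2 := by linarith
  have him : z.im = 0 := by
    by_contra hne
    have h2 : z.im ∣ 2 * z.re + z.im :=
      (Int.pow_dvd_pow_iff two_ne_zero).1 ⟨73, by rw [h1]; ring⟩
    obtain ⟨k, hk⟩ := h2
    rw [hk] at h1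
    have h3 : k ^ 2 = 73 := by
      have : z.im ^ 2 ≠ 0 := pow_ne_zero _ hne
      apply mul_left_cancel₀ this
      linarith
    have : k ≤ 8 := by nlinarith
    have : -8 ≤ k := by nlinarith
    interval_cases k <;> omega
  have hre : z.re = 0 := by
    rw [him] at h
    have : z.re ^ 2 = 0 := by linarith
    exact pow_eq_zero_iff two_ne_zero |>.1 this
  ext <;> simp [him, hre]

instance : IsDomain O := by
  have : NoZeroDivisors O := ⟨fun {a b} h => by
    have h1 : norm a * norm b = 0 := by rw [← map_mul, h, QuadraticAlgebra.norm_zero]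
    exact (mul_eq_zero.1 h1).imp eq_zero_of_norm eq_zero_of_norm⟩
  exact NoZeroDivisors.to_isDomain O

/-- For `π = a + bω` of norm `±p`, the quotient map by `π` is `ω ↦ -a/b` modulo `p`, so that
divisibility by `π` is a single congruence. -/
lemma dvd_iff_of_norm {p : ℤ} (hp : Prime p) {π : O} (h : norm π = p) (z : O) :
    π ∣ z ↔ p ∣ z.re * π.im - z.im * π.re := by
  have hN := norm_eq π
  rw [h] at hN
  have hb : ¬ p ∣ π.im := by
    rintro ⟨c, hc⟩
    have ha : p ∣ π.re := by
      apply hp.dvd_of_dvd_pow (n := 2)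
      refine ⟨1 - π.re * c + 18 * c * π.im, ?_⟩
      rw [hc] at hN ⊢
      linear_combination -hN
    obtain ⟨d, hd⟩ := ha
    rw [hc, hd] at hN
    apply hp.not_isUnit
    rw [isUnit_iff_dvd_one]
    refine ⟨d ^ 2 + d * c - 18 * c ^ 2, ?_⟩
    apply mul_left_cancel₀ hp.ne_zero
    linear_combination hN
  constructor
  · rintro ⟨w, rfl⟩
    refine ⟨-w.im, ?_⟩
    simp only [re_mul, im_mul]
    rw [hN]; ring
  · intro hz
    -- `z · star π` is divisible by `p = π · star π`
    have key : (p : O) ∣ z * star π := by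
      rw [intCast_dvd]
      have him : (z * star π).im = -(z.re * π.im - z.im * π.re) := by
        simp; ring
      have hre : π.im * (z * star π).re =
          (π.re + π.im) * (z.re * π.im - z.im * π.re) + p * z.im := by
        simp; linear_combination -z.im * hN
      refine ⟨(hp.dvd_or_dvd (?_ : p ∣ π.im * _)).resolve_left hb, ?_⟩
      · rw [hre]; exact dvd_add (hz.mul_left _) (dvd_mul_right _ _)
      · rw [him]; exact hz.neg_right
    obtain ⟨w, hw⟩ := key
    refine ⟨w, ?_⟩
    have hs : star π ≠ 0 := by
      intro h0
      apply hp.ne_zero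
      rw [← h, ← QuadraticAlgebra.norm_star, h0, QuadraticAlgebra.norm_zero]
    apply mul_right_cancel₀ hs
    rw [hw, ← h, norm_cast_eq]; ring

/-- In effect `O ⧸ (π)` is the field `ℤ/p`; the proof uses the congruence of `dvd_iff_of_norm`. -/
lemma prime_of_norm {p : ℕ} (hp : p.Prime) {π : O} (h : (norm π).natAbs = p) : Prime π := by
  obtain ⟨q, hq⟩ : ∃ q, norm π = q := ⟨_, rfl⟩
  have hqp : Prime q := by rw [Int.prime_iff_natAbs_prime, ← hq, h]; exact hp
  have hN := norm_eq π
  rw [hq] at hN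
  refine ⟨?_, ?_, ?_⟩
  · rintro rfl
    rw [QuadraticAlgebra.norm_zero] at hq
    exact hqp.ne_zero hq.symm
  · intro hu
    have := isUnit_iff_norm_isUnit.1 hu
    rw [hq] at this
    exact hqp.not_isUnit this
  · intro z w hzw
    rw [dvd_iff_of_norm hqp hq] at hzw ⊢
    rw [dvd_iff_of_norm hqp hq]
    apply hqp.dvd_or_dvd
    -- the linear form `x·b - y·a` is multiplicative modulo `q`, up to the factor `b`
    have : (z.re * π.im - z.im * π.re) * (w.re * π.im - w.im * π.re) =
        π.im * ((z * w).re * π.im - (z * w).im * π.re) + q * (z.im * w.im) := by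
      simp; linear_combination -(z.im * w.im) * hN
    rw [this]
    exact dvd_add (hzw.mul_left _) (dvd_mul_right _ _)

/-- An element of norm `±pk` with `0 < k < p` can be divided, up to conjugation, by primes above
those dividing `k` until its norm is `±p`. -/
lemma descent {p : ℕ} (hp : p.Prime)
    (IH : ∀ r < p, r.Prime → Prime (r : O) ∨ ∃ π : O, (norm π).natAbs = r) (k : ℕ) :
    0 < k → k < p → ∀ α : O, (norm α).natAbs = p * k → ∃ β : O, (norm β).natAbs = p := by
  induction k using Nat.strong_induction_on with
  | _ k ih =>
  intro hk0 hkp α hα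
  obtain rfl | hk1 := eq_or_ne k 1
  · exact ⟨α, by simpa using hα⟩
  obtain ⟨r, hr, m, rfl⟩ := Nat.exists_prime_and_dvd hk1
  have hm0 : 0 < m := Nat.pos_of_mul_pos_left hk0
  have hmk : m < r * m := by nlinarith [hr.two_le]
  have hrp : r < p := lt_of_le_of_lt (Nat.le_mul_of_pos_right r hm0) hkp
  have hdvd : (r : O) ∣ α * star α := by
    rw [← norm_cast_eq]
    have : (r : ℤ) ∣ norm α := by
      rw [Int.natCast_dvd, hα]; exact ⟨p * m, by ring⟩
    simpa using map_dvd (Int.castRingHom O) this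
  -- a prime dividing `α * star α` divides `α` or `star α`; take the cofactor `γ`
  have swap : ∀ π : O, Prime π → π ∣ α * star α →
      ∃ γ : O, (norm π).natAbs * (norm γ).natAbs = p * (r * m) := by
    intro π hπ hd
    rcases hπ.dvd_or_dvd hd with ⟨γ, h⟩ | ⟨γ, h⟩
    · exact ⟨γ, by rw [← hα, h, map_mul, Int.natAbs_mul]⟩
    · exact ⟨γ, by rw [← hα, ← QuadraticAlgebra.norm_star α, h, map_mul, Int.natAbs_mul]⟩
  rcases IH r hrp hr with hprime | ⟨π, hπ⟩
  · obtain ⟨γ, hγ⟩ := swap _ hprime hdvd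
    rw [QuadraticAlgebra.norm_natCast, Int.natAbs_pow, Int.natAbs_natCast] at hγ
    have h1 : r * (norm γ).natAbs = p * m := by
      apply Nat.eq_of_mul_eq_mul_left hr.pos
      linarith
    have h2 : r ∣ m := by
      refine (hr.dvd_mul.1 ⟨_, h1.symm⟩).resolve_left fun h => ?_
      exact hrp.ne ((Nat.prime_dvd_prime_iff_eq hr hp).1 h)
    obtain ⟨m', rfl⟩ := h2
    have hm' : 0 < m' := Nat.pos_of_mul_pos_left hm0
    have hlt : m' < r * (r * m') :=
      lt_of_le_of_lt (Nat.le_mul_of_pos_left m' hr.pos) hmk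
    refine ih m' hlt hm' (hlt.trans hkp) γ ?_
    apply Nat.eq_of_mul_eq_mul_left hr.pos
    linarith
  · have hd : π ∣ α * star α := by
      refine dvd_trans ?_ hdvd
      have h1 : π ∣ ((norm π : ℤ) : O) := ⟨_, norm_cast_eq π⟩
      have h2 : norm π ∣ (r : ℤ) := by rw [← hπ]; exact Int.dvd_natAbs_self
      exact h1.trans (by simpa using map_dvd (Int.castRingHom O) h2)
    obtain ⟨γ, hγ⟩ := swap π (prime_of_norm hr hπ) hd
    rw [hπ] at hγ
    refine ih m hmk hm0 (hmk.trans hkp) γ ?_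
    apply Nat.eq_of_mul_eq_mul_left hr.pos
    linarith

/-- If `p` is not prime in the order, then `X² - X - 18` has a root modulo `p`. -/
lemma exists_root {p : ℕ} (hp : p.Prime) (h : ¬ Prime (p : O)) :
    ∃ n : ℤ, (p : ℤ) ∣ n ^ 2 - n - 18 := by
  have hpz : Prime (p : ℤ) := Nat.prime_iff_prime_int.1 hp
  have hcast : ((p : ℤ) : O) = (p : O) := by simp
  rw [← hcast] at h
  have hex : ∃ z w : O, ((p : ℤ) : O) ∣ z * w ∧ ¬ ((p : ℤ) : O) ∣ z ∧ ¬ ((p : ℤ) : O) ∣ w := by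
    by_contra! hcon
    refine h ⟨?_, ?_, fun z w hzw => ?_⟩
    · rw [hcast]; exact_mod_cast hp.ne_zero
    · intro hu
      rw [isUnit_iff_dvd_one, intCast_dvd] at hu
      exact hpz.not_isUnit (isUnit_iff_dvd_one.2 (by simpa using hu.1))
    · by_cases hz : ((p : ℤ) : O) ∣ z
      · exact Or.inl hz
      · exact Or.inr (hcon z w hzw hz)
  obtain ⟨z, w, hzw, hz, hw⟩ := hex
  have hN : (p : ℤ) ∣ norm z := by
    by_contra hN
    apply hw
    have h1 : ((p : ℤ) : O) ∣ ((norm z : ℤ) : O) * w := by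
      rw [norm_cast_eq, mul_right_comm]
      exact hzw.mul_right _
    rw [intCast_dvd] at h1 ⊢
    simp only [re_mul, im_mul, re_intCast, im_intCast, mul_zero, zero_mul, add_zero] at h1
    exact ⟨(hpz.dvd_or_dvd h1.1).resolve_left hN, (hpz.dvd_or_dvd h1.2).resolve_left hN⟩
  rw [norm_eq] at hN
  have hb : ¬ (p : ℤ) ∣ z.im := by
    intro hb
    apply hz
    rw [intCast_dvd]
    refine ⟨hpz.dvd_of_dvd_pow (n := 2) ?_, hb⟩
    have : z.re ^ 2 = (z.re ^ 2 + z.re * z.im - 18 * z.im ^ 2) + z.im * (18 * z.im - z.re) := by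
      ring
    rw [this]
    exact dvd_add hN (hb.mul_right _)
  obtain ⟨u, v, huv⟩ : IsCoprime (p : ℤ) z.im := (hpz.coprime_iff_not_dvd).2 hb
  -- `v` is an inverse of `z.im` modulo `p`, and `-z.re / z.im` is a root
  refine ⟨-(z.re * v), ?_⟩
  obtain ⟨c, hc⟩ := hN
  have hv : v * z.im = 1 - u * p := by linarith
  refine ⟨v ^ 2 * c + u * (z.re * v - 18 * (1 + v * z.im)), ?_⟩
  linear_combination v ^ 2 * hc + (18 * (1 + v * z.im) - z.re * v) * hv

lemma isPrime_or_norm (p : ℕ) :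
    p.Prime → Prime (p : O) ∨ ∃ π : O, (norm π).natAbs = p := by
  induction p using Nat.strong_induction_on with
  | _ p IH =>
  intro hp
  by_cases hP : Prime (p : O)
  · exact Or.inl hP
  right
  obtain rfl | h2 := eq_or_ne p 2
  · exact ⟨⟨4, 1⟩, by rw [norm_eq]; norm_num⟩
  obtain rfl | h3 := eq_or_ne p 3
  · exact ⟨⟨15, 4⟩, by rw [norm_eq]; norm_num⟩
  have h5 : 5 ≤ p := by
    have := hp.two_le
    have : p ≠ 4 := by rintro rfl; exact absurd hp (by norm_num)
    omega
  obtain ⟨s, hs⟩ : ∃ s, p = 2 * s + 1 := hp.odd_of_ne_two h2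
  obtain ⟨n₀, hn₀⟩ := exists_root hp hP
  -- the representative of `n₀` modulo `p = 2s + 1` in `[-s, s]`
  obtain ⟨n, hn, hl, hu⟩ : ∃ n : ℤ, (p : ℤ) ∣ n ^ 2 - n - 18 ∧ -s ≤ n ∧ n ≤ s := by
    have hpos : (0 : ℤ) < p := by exact_mod_cast hp.pos
    refine ⟨(n₀ + s) % p - s, ?_, ?_, ?_⟩
    · have hdm := Int.emod_add_mul_ediv (n₀ + s) p
      set q := (n₀ + s) / (p : ℤ)
      have e : (n₀ + s) % p - s = n₀ - p * q := by linarith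
      rw [e]
      have : (n₀ - p * q) ^ 2 - (n₀ - p * q) - 18 =
          (n₀ ^ 2 - n₀ - 18) + p * (q * (p * q - 2 * n₀ + 1)) := by ring
      rw [this]
      exact dvd_add hn₀ (dvd_mul_right _ _)
    · linarith [Int.emod_nonneg (n₀ + s) hpos.ne']
    · have := Int.emod_lt_of_pos (n₀ + s) hpos
      have : (p : ℤ) = 2 * s + 1 := by exact_mod_cast hs
      linarith
  have hnorm : norm (⟨n, -1⟩ : O) = n ^ 2 - n - 18 := by rw [norm_eq]; ring
  rw [← hnorm] at hn
  obtain ⟨k, hk⟩ := Int.natCast_dvd.1 hn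
  refine descent hp IH k ?_ ?_ _ hk
  · refine Nat.pos_of_ne_zero ?_
    rintro rfl
    have h0 := eq_zero_of_norm (Int.natAbs_eq_zero.1 (hk.trans (mul_zero p)))
    have := congrArg QuadraticAlgebra.im h0
    simp at this
  · have hpe : (p : ℤ) = 2 * s + 1 := by exact_mod_cast hs
    have h5' : (5 : ℤ) ≤ p := by exact_mod_cast h5
    have hlt : |norm (⟨n, -1⟩ : O)| < (p : ℤ) * p := by
      rw [hnorm, abs_lt]
      constructor <;> nlinarith [sq_nonneg (2 * n - 1)]
    rw [Int.abs_eq_natAbs, hk] at hlt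
    have : p * k < p * p := by exact_mod_cast hlt
    exact lt_of_mul_lt_mul_left this (Nat.zero_le p)

/-- A prime ideal containing a nonzero natural number contains a rational prime. -/
lemma exists_prime_mem {I : Ideal O} (hI : I.IsPrime) (n : ℕ) (hn : n ≠ 0) (h : (n : O) ∈ I) :
    ∃ p : ℕ, p.Prime ∧ (p : O) ∈ I := by
  induction n using induction_on_primes with
  | zero => exact absurd rfl hn
  | one => exact absurd ((Ideal.eq_top_iff_one I).2 (by simpa using h)) hI.ne_top
  | prime_mul p a hp ih =>
    rw [Nat.cast_mul] at h
    rcases hI.mem_or_mem h with h | h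
    · exact ⟨p, hp, h⟩
    · exact ih (right_ne_zero_of_mul hn) h

theorem ufm : UniqueFactorizationMonoid O := by
  rw [UniqueFactorizationMonoid.iff_exists_prime_mem_of_isPrime]
  intro I hI0 hI
  -- `I` contains the natural number `|N(z)|`, for any `z` in it
  have absMem : ∀ z : O, (((norm z).natAbs : ℕ) : O) ∈ I ↔ z * star z ∈ I := by
    intro z
    rw [← norm_cast_eq]
    rcases Int.natAbs_eq (norm z) with h | h
    · conv_rhs => rw [h]
      simp
    · conv_rhs => rw [h]
      simp
  obtain ⟨x, hx, hx0⟩ := Submodule.exists_mem_ne_zero_of_ne_bot hI0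
  obtain ⟨p, hp, hpI⟩ := exists_prime_mem hI (norm x).natAbs
    (fun h => hx0 (eq_zero_of_norm (Int.natAbs_eq_zero.1 h)))
    ((absMem x).2 (I.mul_mem_right _ hx))
  rcases isPrime_or_norm p hp with h | ⟨π, hπ⟩
  · exact ⟨p, hpI, h⟩
  · rw [← hπ, absMem] at hpI
    rcases hI.mem_or_mem hpI with h | h
    · exact ⟨π, h, prime_of_norm hp hπ⟩
    · exact ⟨star π, h, prime_of_norm hp (by rw [QuadraticAlgebra.norm_star, hπ])⟩

lemma root_sq : (AdjoinRoot.root (X ^ 2 - X - C 18 : ℤ[X])) *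
    AdjoinRoot.root (X ^ 2 - X - C 18 : ℤ[X]) =
    (18 : ℤ) • 1 + (1 : ℤ) • AdjoinRoot.root (X ^ 2 - X - C 18 : ℤ[X]) := by
  have h := AdjoinRoot.eval₂_root (X ^ 2 - X - C 18 : ℤ[X])
  simp only [eval₂_sub, eval₂_pow, eval₂_X, eval₂_C] at h
  have h18 : AdjoinRoot.of (X ^ 2 - X - C 18 : ℤ[X]) 18 = 18 := map_ofNat _ 18
  rw [h18] at h
  simp only [zsmul_eq_mul, Int.cast_one, Int.cast_ofNat]
  linear_combination h

/-- The isomorphism `ℤ[X]/(X² - X - 18) ≃ O` sending `X` to `ω`. -/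
noncomputable def equivO : AdjoinRoot (X ^ 2 - X - C 18 : ℤ[X]) ≃ₐ[ℤ] O :=
  AlgEquiv.ofAlgHom
    (AdjoinRoot.liftAlgHom _ (Algebra.ofId ℤ O) omega (by
      simp only [eval₂_sub, eval₂_pow, eval₂_X, eval₂_C]
      ext <;> simp [pow_two]))
    (QuadraticAlgebra.lift ⟨_, root_sq⟩)
    (by ext <;> simp)
    (by ext; simp)

end Order73

/-- The quadratic order `O₇₃ = ℤ[(1+√73)/2] ≅ ℤ[X]/(X² - X - 18)` of
discriminant `D = 73` is a unique factorization domain. -/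
theorem order_disc_73_ufd :
    ∃ hdom : IsDomain (AdjoinRoot (X ^ 2 - X - C 18 : ℤ[X])),
      letI := hdom
      UniqueFactorizationMonoid (AdjoinRoot (X ^ 2 - X - C 18 : ℤ[X])) := by
  have hdom : IsDomain (AdjoinRoot (X ^ 2 - X - C 18 : ℤ[X])) :=
    Order73.equivO.toMulEquiv.isDomain _
  exact ⟨hdom, Order73.equivO.symm.toMulEquiv.uniqueFactorizationMonoid Order73.ufm⟩
end

section
/- The ring ℤ[(1+√−163)/2], i.e., the quadratic order O_D of discriminant D = −163 (isomorphic to ℤ[X]/(X² − X + 41)), is a unique factorization domain. -/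
open Polynomial

/-!
The ring is identified with the quadratic algebra `R = ℤ[ω]`, `ω² = -41 + ω`, whose norm form
`x² + xy + 41y²` is positive definite, so `R` is a domain. It is in fact a principal ideal domain:
a nonzero element `β` of minimal norm in an ideal `I` divides every `α ∈ I`.

Dirichlet's approximation theorem, applied to the `ω`-coordinate of `α / β` with denominators up
to `7`, gives `1 ≤ k ≤ 7` and `q ∈ R` such that `k α - q β` has norm smaller than `β`
(`exists_norm_sub_lt`); the bound `7` works because `1/4 + (163/4) / 8² < 1`. By minimality
`k α = q β`. The primes `2, 3, 5, 7` are inert in `R`, since `p ∣ x² + xy + 41y²` forces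
`p ∣ x, y` (`dvd_of_dvd_norm`), so the prime factors of `k` can be removed one at a time
(`dvd_of_mul_eq`): if `p ∣ k` and `p ∣ q`, divide by `p`; if `p ∤ q`, then `N(q)` is prime to `p`
and a Bézout relation shows that `β / p` lies in `I`, against minimality.
-/

namespace Disc163

/-- The order of discriminant `-163`, with `ω² = -41 + 1 · ω`. -/
abbrev R : Type := QuadraticAlgebra ℤ (-41) 1

theorem norm_eq (z : R) : z.norm = z.re ^ 2 + z.re * z.im + 41 * z.im ^ 2 := by
  rw [QuadraticAlgebra.norm_def]; ring

theorem norm_nonneg (z : R) : 0 ≤ z.norm := by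
  rw [norm_eq]; nlinarith [sq_nonneg (2 * z.re + z.im), sq_nonneg z.im]

theorem norm_eq_zero {z : R} : z.norm = 0 ↔ z = 0 := by
  refine ⟨fun h ↦ ?_, fun h ↦ by simp [h]⟩
  rw [norm_eq] at h
  have him : z.im = 0 := by
    have : z.im ^ 2 = 0 := by nlinarith [sq_nonneg (2 * z.re + z.im), sq_nonneg z.im]
    simpa using this
  have hre : z.re = 0 := by simpa [him] using h
  ext <;> simp [him, hre]

theorem norm_pos {z : R} (hz : z ≠ 0) : 0 < z.norm :=
  lt_of_le_of_ne (norm_nonneg z) fun h ↦ hz (norm_eq_zero.1 h.symm)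

instance : NoZeroDivisors R where
  eq_zero_or_eq_zero_of_mul_eq_zero {x y} h := by
    have := congrArg QuadraticAlgebra.norm h
    rw [map_mul, QuadraticAlgebra.norm_zero, mul_eq_zero] at this
    exact this.imp norm_eq_zero.1 norm_eq_zero.1

instance : IsDomain R := NoZeroDivisors.to_isDomain R

/-- The primes up to `7` are inert: they divide a norm only if they divide the element. -/
theorem dvd_of_dvd_norm {p : ℕ} (hp : p.Prime) (hp7 : p ≤ 7) {q : R} (h : (p : ℤ) ∣ q.norm) :
    ∃ r : R, q = p * r := by
  have key : (p : ℤ) ∣ q.re ∧ (p : ℤ) ∣ q.im := by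
    rw [norm_eq] at h
    simp only [← ZMod.intCast_zmod_eq_zero_iff_dvd] at h ⊢
    push_cast at h
    generalize (q.re : ZMod p) = x at *
    generalize (q.im : ZMod p) = y at *
    interval_cases p <;> first | (exfalso; revert hp; decide) | (revert x y; decide)
  obtain ⟨⟨a, ha⟩, b, hb⟩ := key
  refine ⟨⟨a, b⟩, ?_⟩
  ext <;> simp [ha, hb]

/-- A Dirichlet-type weakening of the Euclidean algorithm: division with remainder is possible
after multiplying the dividend by some `k ≤ 7`. -/
theorem exists_norm_sub_lt (α : R) {β : R} (hβ : β ≠ 0) :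
    ∃ (k : ℕ) (q : R), 0 < k ∧ k ≤ 7 ∧ ((k : R) * α - q * β).norm < β.norm := by
  have hn := norm_pos hβ
  -- `γ / N(β)` is the quotient `α / β`.
  set γ := α * star β with hγ
  set n := β.norm with hn'
  have hnR : (0 : ℝ) < n := by exact_mod_cast hn
  obtain ⟨j, k, hk, hk7, hj⟩ :=
    Real.exists_int_int_abs_mul_sub_le ((γ.im : ℝ) / n) (n := 7) (by norm_num)
  lift k to ℕ using hk.le
  set d : ℝ := k * ((γ.im : ℝ) / n) - j with hd
  have hj : |d| ≤ 1 / 8 := by simpa [hd] using hj.trans (by norm_num)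
  -- Completing the square in `a² + ab + 41b² = (a + b/2)² + (163/4)b²` dictates the centre.
  set m : ℤ := round ((k : ℝ) * (γ.re / n) + d / 2) with hm
  set a : ℝ := k * ((γ.re : ℝ) / n) - m with ha
  have h1 : |a + d / 2| ≤ 1 / 2 := by
    have := abs_sub_round ((k : ℝ) * (γ.re / n) + d / 2)
    rw [← hm] at this
    rwa [show a + d / 2 = (k : ℝ) * (γ.re / n) + d / 2 - m by rw [ha]; ring]
  have hlt : a ^ 2 + a * d + 41 * d ^ 2 < 1 := by
    have h2 : (a + d / 2) ^ 2 ≤ (1 / 2) ^ 2 := sq_le_sq' (abs_le.1 h1).1 (abs_le.1 h1).2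
    have h3 : d ^ 2 ≤ (1 / 8) ^ 2 := sq_le_sq' (abs_le.1 hj).1 (abs_le.1 hj).2
    nlinarith
  refine ⟨k, ⟨m, j⟩, by exact_mod_cast hk, by exact_mod_cast hk7, ?_⟩
  set δ : R := (k : R) * α - ⟨m, j⟩ * β with hδ
  have hββ : β * star β = (n : R) := by
    rw [← QuadraticAlgebra.algebraMap_norm_eq_mul_star]; rfl
  have hδβ : δ * star β = (k : R) * γ - ⟨m, j⟩ * (n : R) := by
    rw [hδ, sub_mul, mul_assoc, mul_assoc, hββ]
  have hN : (δ.norm : ℝ) * n = n ^ 2 * (a ^ 2 + a * d + 41 * d ^ 2) := by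
    have h4 := congrArg QuadraticAlgebra.norm hδβ
    rw [map_mul, QuadraticAlgebra.norm_star, ← hn', norm_eq ((k : R) * γ - _)] at h4
    simp at h4
    have h5 : (n : ℝ) * a = k * γ.re - m * n := by rw [ha]; field_simp
    have h6 : (n : ℝ) * d = k * γ.im - j * n := by rw [hd]; field_simp
    have h7 : (δ.norm : ℝ) * n = (k * γ.re - m * n) ^ 2
        + (k * γ.re - m * n) * (k * γ.im - j * n) + 41 * (k * γ.im - j * n) ^ 2 := by
      exact_mod_cast h4
    rw [h7, ← h5, ← h6]; ring
  have : (δ.norm : ℝ) < n := by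
    have : (δ.norm : ℝ) * n < n * n := by rw [hN]; nlinarith [sq_pos_of_pos hnR]
    exact lt_of_mul_lt_mul_right this hnR.le
  exact_mod_cast this

/-- Removal of the multiplier `k`, one inert prime factor at a time, using that `β` has minimal
norm in the ideal. -/
theorem dvd_of_mul_eq {I : Ideal R} {β : R} (hβ : β ≠ 0) (hβI : β ∈ I)
    (hmin : ∀ x ∈ I, x ≠ 0 → β.norm ≤ x.norm) {α : R} (hα : α ∈ I) (k : ℕ) :
    ∀ q : R, 0 < k → k ≤ 7 → (k : R) * α = q * β → β ∣ α := by
  induction k using Nat.strong_induction_on with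
  | _ k ih =>
  intro q hk hk7 h
  rcases eq_or_ne k 1 with rfl | hk1
  · exact ⟨q, by rw [mul_comm, ← h]; simp⟩
  obtain ⟨p, hp, l, rfl⟩ := Nat.exists_prime_and_dvd hk1
  have hl : 0 < l := Nat.pos_of_mul_pos_left hk
  have hp2 := hp.two_le
  have hp7 : p ≤ 7 := by nlinarith
  have hp0 : (p : R) ≠ 0 := by exact_mod_cast hp.ne_zero
  by_cases hpq : (p : ℤ) ∣ q.norm
  · obtain ⟨r, rfl⟩ := dvd_of_dvd_norm hp hp7 hpq
    refine ih l (by nlinarith) r hl (by nlinarith) (mul_left_cancel₀ hp0 ?_)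
    rw [← mul_assoc, ← mul_assoc, ← h]; push_cast; ring
  · obtain ⟨u, v, huv⟩ : IsCoprime (p : ℤ) q.norm :=
      (Nat.prime_iff_prime_int.1 hp).coprime_iff_not_dvd.2 hpq
    have huv' : (u : R) * p + v * (q * star q) = 1 := by
      rw [← QuadraticAlgebra.algebraMap_norm_eq_mul_star]
      have := congrArg (algebraMap ℤ R) huv
      simpa using this
    -- The Bézout relation exhibits `β / p` as an element of the ideal.
    set δ : R := u * β + v * star q * l * α with hδ
    have hδI : δ ∈ I := I.add_mem (I.mul_mem_left _ hβI) (I.mul_mem_left _ hα)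
    have hβδ : β = p * δ := by
      push_cast at h
      rw [hδ]
      linear_combination (-β) * huv' - v * star q * h
    have hδ0 : δ ≠ 0 := by
      intro h0; exact hβ (by rw [hβδ, h0, mul_zero])
    have h1 := hmin δ hδI hδ0
    have h2 := norm_pos hδ0
    have h3 : β.norm = (p : ℤ) ^ 2 * δ.norm := by
      rw [hβδ, map_mul, QuadraticAlgebra.norm_natCast]
    have hp4 : (4 : ℤ) ≤ (p : ℤ) ^ 2 := by exact_mod_cast Nat.pow_le_pow_left hp2 2
    nlinarith

instance : IsPrincipalIdealRing R where
  principal I := by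
    rcases eq_or_ne I ⊥ with rfl | hI
    · exact bot_isPrincipal
    obtain ⟨x, hxI, hx⟩ := Submodule.exists_mem_ne_zero_of_ne_bot hI
    obtain ⟨β, ⟨hβI, hβ⟩, hmin⟩ := exists_minimalFor_of_wellFoundedLT
      (fun z : R ↦ z ∈ I ∧ z ≠ 0) (fun z ↦ z.norm.toNat) ⟨x, hxI, hx⟩
    have hmin' : ∀ x ∈ I, x ≠ 0 → β.norm ≤ x.norm := by
      intro x hx hx0
      by_contra hlt
      have := norm_nonneg x
      have := @hmin x ⟨hx, hx0⟩ (by dsimp only; omega)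
      dsimp only at this
      omega
    refine ⟨β, le_antisymm (fun α hα ↦ ?_) ?_⟩
    · obtain ⟨k, q, hk, hk7, hlt⟩ := exists_norm_sub_lt α hβ
      have h0 : (k : R) * α - q * β = 0 := by
        by_contra hne
        have := hmin' _ (I.sub_mem (I.mul_mem_left _ hα) (I.mul_mem_left _ hβI)) hne
        omega
      exact Ideal.mem_span_singleton.2
        (dvd_of_mul_eq hβ hβI hmin' hα k q hk hk7 (sub_eq_zero.1 h0))
    · exact (Ideal.span_singleton_le_iff_mem I).2 hβI

/-- The identification `ℤ[X]/(X² - X + 41) ≃ R` sending the class of `X` to `ω`. -/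
noncomputable def equiv : AdjoinRoot (X ^ 2 - X + C 41 : ℤ[X]) ≃ₐ[ℤ] R :=
  AlgEquiv.ofAlgHom
    (AdjoinRoot.liftAlgHom _ (Algebra.ofId ℤ R) QuadraticAlgebra.omega (by
      simp [eval₂_add, eval₂_sub, pow_two]
      ext <;> simp [QuadraticAlgebra.re_ofNat, QuadraticAlgebra.im_ofNat]))
    (QuadraticAlgebra.lift ⟨AdjoinRoot.root _, by
      have h := AdjoinRoot.eval₂_root (X ^ 2 - X + C 41 : ℤ[X])
      simp only [eval₂_add, eval₂_sub, eval₂_pow, eval₂_X, eval₂_C] at h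
      simp at h ⊢
      linear_combination h⟩)
    (by ext <;> simp)
    (by ext; simp)

end Disc163

/-- The quadratic order `O₋₁₆₃ = ℤ[(1+√-163)/2] ≅ ℤ[X]/(X² - X + 41)` of
discriminant `D = -163` is a unique factorization domain. -/
theorem order_disc_neg163_ufd :
    ∃ hdom : IsDomain (AdjoinRoot (X ^ 2 - X + C 41 : ℤ[X])),
      letI := hdom
      UniqueFactorizationMonoid (AdjoinRoot (X ^ 2 - X + C 41 : ℤ[X])) := by
  refine ⟨Disc163.equiv.toMulEquiv.isDomain Disc163.R, ?_⟩
  exact Disc163.equiv.toMulEquiv.symm.uniqueFactorizationMonoid inferInstance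
end

section
/- Let q ≥ 2 be an integer. Then x² − x + q is a (rational) prime number for every integer x with 0 < x < q if and only if the ring ℤ[(1+√(1−4q))/2], i.e., the quadratic order of discriminant 1 − 4q, is a unique factorization domain. -/
open Polynomial

/-!
Write `τ` for the root of `X² - X + q` and `N (a + bτ) = a² + ab + qb²` for the norm; then
`x² - x + q = N (x - τ)`, and a norm below `q` is a perfect square, since
`4 N (a + bτ) = (2a + b)² + (4q - 1) b²`.

*Factoriality gives primes.* If `x² - x + q` is composite with `0 < x < q`, it is smaller than `q²`,
so its least prime factor `p` is smaller than `q`. Since `p` is then not a norm, it is irreducible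
in `ℤ[τ]`, hence prime. But `p` divides `(x - τ) (x - τ')`, where `τ'` is the conjugate of `τ`,
without dividing either factor.

*Primes give factoriality.* By Kaplansky's criterion it is enough to find a prime element in every
nonzero prime ideal; such an ideal contains a rational prime `p`. If `X² - X + q` has no root
modulo `p`, then `p` itself stays prime (`prime_of_no_root`). If it has one, then `p` is a norm
(`exists_norm_eq_of_root`), say `p = π π'`, where `π` and its conjugate `π'` are prime
(`prime_of_norm_prime`), and one of the two lies in the ideal. That `p` is a norm is proved by
Fermat descent: a root `x` can be chosen with `1 ≤ x ≤ (p + 1) / 2`. Either `x < q`, and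
`x² - x + q` is a prime divisible by `p`, so equal to `p`; or `x² - x + q = p m` with `0 < m < p`,
all prime factors of `m` are norms by induction, and they can be divided out of `x - τ` one at a
time (`exists_norm_eq_of_mul`).
-/

namespace Rabinowitsch

open QuadraticAlgebra

/-- The quadratic order `ℤ[τ]`, with `τ² = -q + τ`: the elements are the pairs
`⟨a, b⟩ = a + bτ` of integers. -/
abbrev Order (q : ℤ) : Type := QuadraticAlgebra ℤ (-q) 1

variable {q : ℤ}

/-- The isomorphism `ℤ[X]/(X² - X + q) ≃ ℤ[τ]` sending the class of `X` to `τ`. -/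
noncomputable def adjoinRootEquiv (q : ℤ) :
    AdjoinRoot (X ^ 2 - X + C q : ℤ[X]) ≃ₐ[ℤ] Order q :=
  AlgEquiv.ofAlgHom
    (AdjoinRoot.liftAlgHom _ (Algebra.ofId ℤ (Order q)) omega (by
      simp only [eval₂_add, eval₂_sub, eval₂_pow, eval₂_X, eval₂_C]
      ext <;> simp [pow_two]))
    (QuadraticAlgebra.lift ⟨AdjoinRoot.root _, by
      have h := AdjoinRoot.eval₂_root (X ^ 2 - X + C q : ℤ[X])
      simp only [eval₂_add, eval₂_sub, eval₂_pow, eval₂_X, eval₂_C] at h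
      simp only [Algebra.smul_def, map_neg, map_one, AdjoinRoot.algebraMap_eq]
      linear_combination h⟩)
    (by ext <;> simp)
    (by ext; simp)

lemma norm_eq (z : Order q) : z.norm = z.re ^ 2 + z.re * z.im + q * z.im ^ 2 := by
  rw [norm_def]; ring

lemma four_mul_norm (z : Order q) :
    4 * z.norm = (2 * z.re + z.im) ^ 2 + (4 * q - 1) * z.im ^ 2 := by
  rw [norm_eq]; ring

lemma norm_nonneg (hq : 2 ≤ q) (z : Order q) : 0 ≤ z.norm := by
  have h := four_mul_norm z
  have : 0 ≤ (4 * q - 1) * z.im ^ 2 := mul_nonneg (by linarith) (sq_nonneg _)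
  nlinarith [sq_nonneg (2 * z.re + z.im)]

lemma eq_zero_of_norm_eq_zero (hq : 2 ≤ q) {z : Order q} (h : z.norm = 0) : z = 0 := by
  have h4 := four_mul_norm z
  have him : z.im = 0 := by
    by_contra hne
    have : 0 < z.im ^ 2 := by positivity
    nlinarith [sq_nonneg (2 * z.re + z.im)]
  have hre : z.re = 0 := by
    rw [norm_eq, him] at h
    simpa using h
  ext <;> simp [him, hre]

lemma isDomain (hq : 2 ≤ q) : IsDomain (Order q) := by
  have : NoZeroDivisors (Order q) := ⟨fun {a b} h => by
    have h' : a.norm * b.norm = 0 := by rw [← map_mul, h, QuadraticAlgebra.norm_zero]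
    exact (mul_eq_zero.1 h').imp (eq_zero_of_norm_eq_zero hq) (eq_zero_of_norm_eq_zero hq)⟩
  exact NoZeroDivisors.to_isDomain _

lemma norm_eq_sq_of_lt (hq : 2 ≤ q) {z : Order q} (h : z.norm < q) : z.norm = z.re ^ 2 := by
  have h4 := four_mul_norm z
  have him : z.im = 0 := by
    by_contra hne
    have : 0 < z.im ^ 2 := by positivity
    nlinarith [sq_nonneg (2 * z.re + z.im)]
  rw [norm_eq, him]; ring

/-- A rational prime below `q` is irreducible in `ℤ[τ]`, because it is not a norm. -/
lemma irreducible_of_prime_lt (hq : 2 ≤ q) {p : ℕ} (hp : p.Prime) (hpq : (p : ℤ) < q) :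
    Irreducible (algebraMap ℤ (Order q) p) := by
  have hp1 : ¬ IsUnit (p : ℤ) := (Nat.prime_iff_prime_int.1 hp).not_isUnit
  refine ⟨fun h => ?_, fun a b hab => ?_⟩
  · rw [isUnit_iff_norm_isUnit, QuadraticAlgebra.norm_algebraMap, isUnit_pow_iff two_ne_zero] at h
    exact hp1 h
  · have hn : a.norm.natAbs * b.norm.natAbs = p ^ 2 := by
      rw [← Int.natAbs_mul, ← map_mul, ← hab, QuadraticAlgebra.norm_algebraMap, Int.natAbs_pow, Int.natAbs_natCast]
    obtain ⟨i, hi, hia⟩ := (Nat.dvd_prime_pow hp).1 (Dvd.intro _ hn)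
    simp only [isUnit_iff_norm_isUnit, Int.isUnit_iff_natAbs_eq]
    interval_cases i
    · left; simpa using hia
    · exfalso
      have ha : a.norm = p := by
        rw [← Int.natAbs_of_nonneg (norm_nonneg hq a), hia, pow_one]
      have hsq := norm_eq_sq_of_lt hq (ha ▸ hpq)
      exact (Nat.prime_iff_prime_int.1 hp).irreducible.not_isSquare
        ⟨a.re, by rw [← ha, hsq, sq]⟩
    · right
      rw [hia] at hn
      exact Nat.eq_of_mul_eq_mul_left (pow_pos hp.pos 2) (by rw [hn, mul_one])

theorem prime_of_ufm (hq : 2 ≤ q) [UniqueFactorizationMonoid (Order q)] {x : ℤ} (hx : 0 < x)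
    (hxq : x < q) : Prime (x ^ 2 - x + q) := by
  obtain ⟨n, hn⟩ := Int.eq_ofNat_of_zero_le (a := x ^ 2 - x + q) (by nlinarith)
  rw [hn, ← Nat.prime_iff_prime_int]
  by_contra hnp
  have hn2 : 2 ≤ n := by
    zify; rw [← hn]; nlinarith
  have hp : n.minFac.Prime := Nat.minFac_prime (by omega)
  have hle : (n.minFac : ℤ) ^ 2 ≤ n := by
    exact_mod_cast Nat.minFac_sq_le_self (by omega) hnp
  have hpq : (n.minFac : ℤ) < q := by
    refine lt_of_pow_lt_pow_left₀ 2 (by omega) (hle.trans_lt ?_)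
    rw [← hn]; nlinarith
  have hprime := (irreducible_of_prime_lt hq hp hpq).prime
  have hdvd : algebraMap ℤ (Order q) n.minFac ∣ ⟨x, -1⟩ * ⟨x - 1, 1⟩ := by
    have : (⟨x, -1⟩ * ⟨x - 1, 1⟩ : Order q) = algebraMap ℤ _ n := by
      ext <;> simp
      rw [← hn]; ring
    rw [this, algebraMap_dvd_iff_dvd]
    exact_mod_cast n.minFac_dvd
  have hpu : ¬ IsUnit (n.minFac : ℤ) := (Nat.prime_iff_prime_int.1 hp).not_isUnit
  rcases hprime.dvd_or_dvd hdvd with h | h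
  · exact hpu (isUnit_of_dvd_unit (algebraMap_dvd_iff.1 h).2 (by simp))
  · exact hpu (isUnit_of_dvd_one (algebraMap_dvd_iff.1 h).2)

/-- If `N π = p` is prime, divisibility by `π` is read off from a single coordinate: when `p`
divides the `τ`-coordinate `v` of `α π' = u + vτ`, it divides `N (α π') = p N α`, hence `u²`. -/
lemma dvd_iff_dvd_im (hq : 2 ≤ q) {p : ℤ} (hp : Prime p) {π : Order q} (hπ : π.norm = p)
    (α : Order q) : π ∣ α ↔ p ∣ (α * star π).im := by
  have := isDomain hq
  have hπp : algebraMap ℤ (Order q) p = π * star π := by rw [← hπ, algebraMap_norm_eq_mul_star]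
  have hstar : star π ≠ 0 := by
    intro h
    apply hp.ne_zero
    rw [← hπ, ← QuadraticAlgebra.norm_star, h, QuadraticAlgebra.norm_zero]
  have h1 : π ∣ α ↔ algebraMap ℤ (Order q) p ∣ α * star π := by
    rw [hπp, mul_dvd_mul_iff_right hstar]
  rw [h1, algebraMap_dvd_iff]
  refine ⟨And.right, fun h => ⟨?_, h⟩⟩
  have hN : (α * star π).norm = α.norm * p := by rw [map_mul, QuadraticAlgebra.norm_star, hπ]
  rw [norm_eq] at hN
  refine hp.dvd_of_dvd_pow (n := 2) ?_
  have : (α * star π).re ^ 2 = α.norm * p - (α * star π).im *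
    ((α * star π).re + q * (α * star π).im) := by linear_combination hN
  rw [this]
  exact dvd_sub (dvd_mul_left _ _) (h.mul_right _)

/-- With `π = a + bτ`, the `τ`-coordinate `L α` of `α π'` satisfies
`L α * L β = -b * L (α β) + p * α.im * β.im`: it is multiplicative modulo `p`, up to `-b`. By
`dvd_iff_dvd_im`, primality of `π` follows from that of `p`. -/
lemma prime_of_norm_prime (hq : 2 ≤ q) {p : ℤ} (hp : Prime p) {π : Order q} (hπ : π.norm = p) :
    Prime π := by
  refine ⟨fun h => ?_, fun h => ?_, fun α β h => ?_⟩
  · apply hp.ne_zero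
    rw [← hπ, h, QuadraticAlgebra.norm_zero]
  · rw [isUnit_iff_norm_isUnit, hπ] at h
    exact hp.not_isUnit h
  · rw [dvd_iff_dvd_im hq hp hπ] at h ⊢
    rw [dvd_iff_dvd_im hq hp hπ β]
    apply hp.dvd_or_dvd
    have : (α * star π).im * (β * star π).im =
        -π.im * (α * β * star π).im + p * (α.im * β.im) := by
      rw [← hπ, norm_eq]
      simp
      ring
    rw [this]
    exact dvd_add (h.mul_left _) (dvd_mul_right _ _)

/-- A rational prime modulo which `X² - X + q` has no root is inert. -/
lemma prime_of_no_root {p : ℤ} (hp : Prime p) (h : ∀ x : ℤ, ¬ p ∣ x ^ 2 - x + q) :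
    Prime (algebraMap ℤ (Order q) p) := by
  have key : ∀ α : Order q, p ∣ α.norm → algebraMap ℤ (Order q) p ∣ α := by
    intro α hα
    rw [norm_eq] at hα
    have him : p ∣ α.im := by
      by_contra hd
      obtain ⟨u, v, huv⟩ := (hp.irreducible.coprime_iff_not_dvd).2 hd
      -- `v` inverts `α.im` modulo `p`, so `-re / im` is a root of `X² - X + q` modulo `p`.
      apply h (-(α.re * v))
      have : (-(α.re * v)) ^ 2 - -(α.re * v) + q =
          v ^ 2 * (α.re ^ 2 + α.re * α.im + q * α.im ^ 2) +
            p * (u * (α.re * v + q * (1 + v * α.im))) := by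
        linear_combination (-α.re * v - q * (1 + v * α.im)) * huv
      rw [this]
      exact dvd_add (hα.mul_left _) (dvd_mul_right _ _)
    refine algebraMap_dvd_iff.2 ⟨hp.dvd_of_dvd_pow (n := 2) ?_, him⟩
    have : α.re ^ 2 = (α.re ^ 2 + α.re * α.im + q * α.im ^ 2) - α.im * (α.re + q * α.im) := by
      ring
    rw [this]
    exact dvd_sub hα (him.mul_right _)
  refine ⟨fun h0 => hp.ne_zero ?_, fun hu => hp.not_isUnit ?_, fun α β hαβ => ?_⟩
  · exact algebraMap_injective (by rw [h0, map_zero])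
  · rwa [isUnit_iff_norm_isUnit, QuadraticAlgebra.norm_algebraMap, isUnit_pow_iff two_ne_zero] at hu
  · have hn : p ∣ α.norm * β.norm := by
      rw [← map_mul]
      have := map_dvd QuadraticAlgebra.norm hαβ
      rw [QuadraticAlgebra.norm_algebraMap] at this
      exact (dvd_pow_self p two_ne_zero).trans this
    exact (hp.dvd_or_dvd hn).imp (key α) (key β)

/-- Descent: if `p m` is a norm and so is every prime factor of `m`, then `p` is a norm. -/
lemma exists_norm_eq_of_mul (hq : 2 ≤ q) (p m : ℕ) (hm : m ≠ 0)
    (hr : ∀ r : ℕ, r.Prime → r ∣ m → ∃ ρ : Order q, ρ.norm = r)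
    (α : Order q) (hα : α.norm = p * m) : ∃ π : Order q, π.norm = p := by
  induction m using induction_on_primes generalizing α with
  | zero => exact absurd rfl hm
  | one => exact ⟨α, by simpa using hα⟩
  | prime_mul r m hrp ih =>
    obtain ⟨ρ, hρ⟩ := hr r hrp (dvd_mul_right _ _)
    have hr' := Nat.prime_iff_prime_int.1 hrp
    have hdvd : ρ ∣ α * star α := by
      rw [← algebraMap_norm_eq_mul_star, hα]
      have h1 : ρ ∣ algebraMap ℤ (Order q) r := by
        rw [← hρ, algebraMap_norm_eq_mul_star]; exact dvd_mul_right _ _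
      refine h1.trans (algebraMap_dvd_iff_dvd.2 ?_)
      exact ⟨p * m, by push_cast; ring⟩
    -- Up to replacing `α` by its conjugate, which has the same norm, `ρ` divides `α`.
    obtain ⟨β, hβ, γ, rfl⟩ : ∃ β : Order q, β.norm = p * (r * m : ℕ) ∧ ρ ∣ β := by
      rcases (prime_of_norm_prime hq hr' hρ).dvd_or_dvd hdvd with h | h
      · exact ⟨α, hα, h⟩
      · exact ⟨star α, by rw [QuadraticAlgebra.norm_star, hα], h⟩
    refine ih (right_ne_zero_of_mul hm) (fun s hs hsm => hr s hs (hsm.mul_left _)) γ ?_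
    rw [map_mul, hρ] at hβ
    apply mul_left_cancel₀ hr'.ne_zero
    rw [hβ]; push_cast; ring

/-- A root modulo `p` of `X² - X + q` can be moved into `[1, (p + 1) / 2]`, by the symmetry
`x ↦ 1 - x`. -/
lemma exists_small_root {p : ℕ} (hp : p.Prime) {x : ℤ} (hx : (p : ℤ) ∣ x ^ 2 - x + q) :
    ∃ y : ℤ, 0 < y ∧ 2 * y ≤ p + 1 ∧ (p : ℤ) ∣ y ^ 2 - y + q := by
  have hp2 : (2 : ℤ) ≤ p := by exact_mod_cast hp.two_le
  have h0 := Int.emod_nonneg x (b := p) (by omega)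
  have h1 := Int.emod_lt_of_pos x (b := p) (by omega)
  have hr : (p : ℤ) ∣ (x % p) ^ 2 - x % p + q := by
    have hc : (x % p) ^ 2 - x % p + q ≡ x ^ 2 - x + q [ZMOD p] :=
      (((Int.mod_modEq x p).pow 2).sub (Int.mod_modEq x p)).add_right q
    exact (Int.ModEq.dvd_iff hc).2 hx
  generalize x % p = y at *
  rcases h0.eq_or_lt with h | h
  · subst h
    exact ⟨1, by norm_num, by omega, by simpa using hr⟩
  · by_cases hy : 2 * y ≤ p + 1
    · exact ⟨y, h, hy, hr⟩
    · refine ⟨p + 1 - y, by omega, by omega, ?_⟩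
      have : ((p : ℤ) + 1 - y) ^ 2 - (p + 1 - y) + q = (y ^ 2 - y + q) + p * (p + 1 - 2 * y) := by
        ring
      rw [this]
      exact dvd_add hr (dvd_mul_right _ _)

lemma exists_norm_eq_of_root (hq : 2 ≤ q)
    (H : ∀ x : ℤ, 0 < x → x < q → Prime (x ^ 2 - x + q)) (p : ℕ) (hp : p.Prime) (x : ℤ)
    (hx : (p : ℤ) ∣ x ^ 2 - x + q) : ∃ π : Order q, π.norm = p := by
  induction p using Nat.strong_induction_on generalizing x with
  | _ p ih =>
    have hp' := Nat.prime_iff_prime_int.1 hp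
    obtain ⟨y, hy0, hyp, hy⟩ := exists_small_root hp hx
    have hN : (⟨y, -1⟩ : Order q).norm = y ^ 2 - y + q := by
      rw [norm_eq]; ring
    have hpos : 0 < y ^ 2 - y + q := by nlinarith
    rcases lt_or_ge y q with hyq | hyq
    · have ha : Associated (p : ℤ) (y ^ 2 - y + q) :=
        hp'.associated_of_dvd (H y hy0 hyq) hy
      refine ⟨⟨y, -1⟩, ?_⟩
      rw [hN]
      exact (Int.eq_of_associated_of_nonneg ha (by positivity) hpos.le).symm
    · obtain ⟨m', hm'⟩ := hy
      have hp0 : (0 : ℤ) < p := by exact_mod_cast hp.pos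
      have hm0 : 0 < m' := pos_of_mul_pos_right (hm' ▸ hpos) hp0.le
      lift m' to ℕ using hm0.le
      -- From `q ≤ y ≤ (p + 1) / 2` one gets `4 (y² - y + q) ≤ p² + 2p + 1 < 4p²`.
      have hmp : (m' : ℤ) < p := by
        refine lt_of_mul_lt_mul_left ?_ hp0.le
        rw [← hm']
        have : (2 : ℤ) ≤ p := by exact_mod_cast hp.two_le
        nlinarith
      refine exists_norm_eq_of_mul hq p m' (by omega) (fun r hr hrm => ?_) ⟨y, -1⟩ (hN.trans hm')
      have hrp : r < p := (Nat.le_of_dvd (by omega) hrm).trans_lt (by exact_mod_cast hmp)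
      refine ih r hrp hr y ?_
      rw [hm']
      exact (Int.natCast_dvd_natCast.2 hrm).mul_left _

/-- A prime ideal containing a nonzero integer contains a prime number. -/
lemma exists_prime_mem {A : Type*} [CommRing A] (P : Ideal A) [hP : P.IsPrime] (n : ℕ)
    (hn : n ≠ 0) (h : (n : A) ∈ P) : ∃ p : ℕ, p.Prime ∧ (p : A) ∈ P := by
  induction n using induction_on_primes with
  | zero => exact absurd rfl hn
  | one => exact absurd (P.eq_top_iff_one.2 (by simpa using h)) hP.ne_top
  | prime_mul r m hr ih =>
    rw [Nat.cast_mul] at h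
    rcases hP.mem_or_mem h with h | h
    · exact ⟨r, hr, h⟩
    · exact ih (right_ne_zero_of_mul hn) h

theorem ufm_of_prime (hq : 2 ≤ q) (H : ∀ x : ℤ, 0 < x → x < q → Prime (x ^ 2 - x + q)) :
    UniqueFactorizationMonoid (Order q) := by
  have := isDomain hq
  refine UniqueFactorizationMonoid.iff_exists_prime_mem_of_isPrime.2 fun P hP0 hP => ?_
  obtain ⟨α, hαP, hα0⟩ := P.ne_bot_iff.1 hP0
  obtain ⟨p, hp, hpP⟩ : ∃ p : ℕ, p.Prime ∧ (p : Order q) ∈ P := by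
    refine exists_prime_mem P α.norm.natAbs ?_ ?_
    · exact fun h => hα0 (eq_zero_of_norm_eq_zero hq (Int.natAbs_eq_zero.1 h))
    · have h1 : algebraMap ℤ (Order q) α.norm ∈ P := by
        rw [algebraMap_norm_eq_mul_star]
        exact P.mul_mem_right _ hαP
      have h2 : ((α.norm.natAbs : ℕ) : Order q) = algebraMap ℤ (Order q) α.norm := by
        rw [← Int.cast_natCast, Int.natAbs_of_nonneg (norm_nonneg hq α)]
        rfl
      rwa [h2]
  have hp' := Nat.prime_iff_prime_int.1 hp
  have hcast : (p : Order q) = algebraMap ℤ (Order q) p := rfl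
  by_cases hroot : ∃ x : ℤ, (p : ℤ) ∣ x ^ 2 - x + q
  · obtain ⟨x, hx⟩ := hroot
    obtain ⟨π, hπ⟩ := exists_norm_eq_of_root hq H p hp x hx
    rw [hcast, ← hπ, algebraMap_norm_eq_mul_star] at hpP
    rcases hP.mem_or_mem hpP with h | h
    · exact ⟨π, h, prime_of_norm_prime hq hp' hπ⟩
    · exact ⟨star π, h, prime_of_norm_prime hq hp' (by rw [QuadraticAlgebra.norm_star, hπ])⟩
  · push Not at hroot
    exact ⟨_, hpP, hcast ▸ prime_of_no_root hp' hroot⟩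

end Rabinowitsch

/-- **Frobenius–Rabinowitsch.** Let `q ≥ 2` be an integer.  Then `x² - x + q` is a
rational prime for every integer `0 < x < q` if and only if the quadratic order
`ℤ[(1+√(1-4q))/2] ≅ ℤ[X]/(X² - X + q)` of discriminant `1 - 4q` is a unique
factorization domain. -/
theorem rabinowitsch (q : ℤ) (hq : 2 ≤ q) :
    (∀ x : ℤ, 0 < x → x < q → Prime (x ^ 2 - x + q)) ↔
      ∃ hdom : IsDomain (AdjoinRoot (X ^ 2 - X + C q : ℤ[X])),
        letI := hdom
        UniqueFactorizationMonoid (AdjoinRoot (X ^ 2 - X + C q : ℤ[X])) := by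
  have e := (Rabinowitsch.adjoinRootEquiv q).toMulEquiv
  constructor
  · intro H
    have := Rabinowitsch.isDomain hq
    exact ⟨e.isDomain _, e.symm.uniqueFactorizationMonoid (Rabinowitsch.ufm_of_prime hq H)⟩
  · rintro ⟨_, hU⟩ x hx hxq
    have := e.uniqueFactorizationMonoid hU
    exact Rabinowitsch.prime_of_ufm hq hx hxq
end

section
/- If x² − x + 41 is a (rational) prime number for each of x = 1, 2, 3, 4, then x² − x + 41 is a prime number for every integer x with 1 ≤ x ≤ 40. -/
/-!
Write `f x = x² - x + 41`. The proof is a strong induction on `x`, the base cases `x ≤ 4` being the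
hypothesis. If `f x` is composite with `5 ≤ x ≤ 40`, its least prime factor `p` satisfies
`p² ≤ f x ≤ 1601 < 41²`, so `p < 41`, and `p² ≤ f x < (2x - 1)²`, so `p < 2x - 1`.
As `f (x - p) ≡ f x (mod p)` and `f (1 - t) = f t`, the prime `p` divides `f y` for both `y = x - p`
and `y = p + 1 - x`; one of these satisfies `1 ≤ y < x`. By induction `f y` is prime, hence
`p = f y ≥ 41`, a contradiction.
-/

/-- If `x² - x + 41` is a rational prime for each of `x = 1, 2, 3, 4`, then
`x² - x + 41` is a rational prime for every integer `1 ≤ x ≤ 40`. -/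
theorem euler_polynomial_prime_propagation
    (H : ∀ x : ℤ, (x = 1 ∨ x = 2 ∨ x = 3 ∨ x = 4) → Prime (x ^ 2 - x + 41)) :
    ∀ x : ℤ, 1 ≤ x → x ≤ 40 → Prime (x ^ 2 - x + 41) := by
  have key : ∀ n : ℕ, 1 ≤ (n : ℤ) → (n : ℤ) ≤ 40 → Prime ((n : ℤ) ^ 2 - n + 41) := by
    intro n
    induction n using Nat.strong_induction_on with
    | _ n ih =>
    intro h1 h40
    by_cases h4 : (n : ℤ) ≤ 4
    · exact H n (by omega)
    by_contra hnp
    obtain ⟨m, hm⟩ := Int.eq_ofNat_of_zero_le (show 0 ≤ (n : ℤ) ^ 2 - n + 41 by nlinarith)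
    rw [hm, ← Nat.prime_iff_prime_int] at hnp
    have hm41 : 41 ≤ (m : ℤ) := by nlinarith
    have hp : m.minFac.Prime := Nat.minFac_prime (by omega)
    have hsq : ((m.minFac : ℕ) : ℤ) ^ 2 ≤ m := by
      exact_mod_cast Nat.minFac_sq_le_self (by omega) hnp
    have hdvd : ((m.minFac : ℕ) : ℤ) ∣ m := by exact_mod_cast Nat.minFac_dvd m
    generalize m.minFac = p at hp hsq hdvd
    rw [← hm] at hsq hdvd
    have hp41 : (p : ℤ) < 41 := by nlinarith
    have hp2 : (p : ℤ) < 2 * n - 1 := by nlinarith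
    obtain ⟨y, hy1, hyn, hy⟩ : ∃ y : ℕ, 1 ≤ y ∧ y < n ∧ (p : ℤ) ∣ (y : ℤ) ^ 2 - y + 41 := by
      have hred : (p : ℤ) ∣ ((n : ℤ) - p) ^ 2 - (n - p) + 41 := by
        have h := hdvd.sub (dvd_mul_right (p : ℤ) (2 * n - p - 1))
        rwa [show ((n : ℤ) - p) ^ 2 - (n - p) + 41
          = n ^ 2 - n + 41 - p * (2 * n - p - 1) by ring]
      have hp0 := hp.pos
      rcases lt_or_ge p n with hlt | hge
      · refine ⟨n - p, by omega, by omega, ?_⟩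
        rwa [Nat.cast_sub hlt.le]
      · refine ⟨p + 1 - n, by omega, by omega, ?_⟩
        rw [Nat.cast_sub (by omega)]
        push_cast
        rwa [show ((p : ℤ) + 1 - n) ^ 2 - (p + 1 - n) + 41
          = (n - p) ^ 2 - (n - p) + 41 by ring]
    have hprime := ih y hyn (by omega) (by omega)
    have heq := Int.eq_of_associated_of_nonneg
      ((Nat.prime_iff_prime_int.mp hp).associated_of_dvd hprime hy) (by omega) (by nlinarith)
    nlinarith
  intro x h1 h40
  lift x to ℕ using by omega
  exact key x h1 h40
end
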